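/- Let D be a non-dictatorial, tops-only, unidimensional domain and fix n ≥ 2. There exists an anonymous and strategy-proof rule f : D^n → A if and only if D is a single-peaked domain on the line L^A, i.e., D ⊆ D_SP(L^A) and G_∼ is connected. -/

import Mathlib

open Classical

/-- A strict preference over `A`, represented as a ranking bijection:
`P k` is the `(k+1)`-th ranked alternative. -/
abbrev Pref (A : Type*) [Fintype A] := Fin (Fintype.card A) ≃ A

variable {A : Type*} [Fintype A] [DecidableEq A] [Nonempty A]

/-- `rk P k` : the `(k+1)`-th ranked alternative of `P` (0-indexed, so `rk P 0 = r₁(P)`). -/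
noncomputable def rk (P : Pref A) (k : ℕ) : A :=
  if h : k < Fintype.card A then P ⟨k, h⟩ else Classical.arbitrary A

/-- The peak `r₁(P)`. -/
noncomputable def peak (P : Pref A) : A := rk P 0

/-- The second-ranked alternative `r₂(P)`. -/
noncomputable def second (P : Pref A) : A := rk P 1

/-- `a` is strictly preferred to `b` under `P`. -/
def prefers (P : Pref A) (a b : A) : Prop := P.symm a < P.symm b

/-- Two preferences are completely reversed. -/
def Reversed (P P' : Pref A) : Prop := ∀ a b : A, prefers P a b ↔ prefers P' b a

/-- A profile lies in the domain `D`. -/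
def InDom (D : Set (Pref A)) {n : ℕ} (P : Fin n → Pref A) : Prop := ∀ i, P i ∈ D

/-- Unanimity (an SCF satisfying it is called a rule). -/
def IsRule (D : Set (Pref A)) {n : ℕ} (f : (Fin n → Pref A) → A) : Prop :=
  ∀ P : Fin n → Pref A, InDom D P → ∀ a : A, (∀ i, peak (P i) = a) → f P = a

/-- Strategy-proofness (relative to the domain `D`). -/
def StrategyProof (D : Set (Pref A)) {n : ℕ} (f : (Fin n → Pref A) → A) : Prop :=
  ∀ P : Fin n → Pref A, InDom D P → ∀ i : Fin n, ∀ Q ∈ D,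
    f P = f (Function.update P i Q) ∨ prefers (P i) (f P) (f (Function.update P i Q))

/-- The tops-only property. -/
def TopsOnly (D : Set (Pref A)) {n : ℕ} (f : (Fin n → Pref A) → A) : Prop :=
  ∀ P P' : Fin n → Pref A, InDom D P → InDom D P' →
    (∀ i, peak (P i) = peak (P' i)) → f P = f P'

/-- Anonymity. -/
def Anonymous (D : Set (Pref A)) {n : ℕ} (f : (Fin n → Pref A) → A) : Prop :=
  ∀ P : Fin n → Pref A, InDom D P → ∀ σ : Equiv.Perm (Fin n), f (P ∘ σ) = f P

/-- `f` behaves like a dictatorship on `B`. -/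
def DictatorOn (D : Set (Pref A)) {n : ℕ} (f : (Fin n → Pref A) → A) (B : Set A) : Prop :=
  ∃ i : Fin n, ∀ P : Fin n → Pref A, InDom D P → (∀ j, peak (P j) ∈ B) → f P = peak (P i)

/-- `f` is a dictatorship. -/
def Dictatorship (D : Set (Pref A)) {n : ℕ} (f : (Fin n → Pref A) → A) : Prop :=
  DictatorOn D f Set.univ

/-- A dictatorial domain. -/
def DictatorialDomain (D : Set (Pref A)) : Prop :=
  ∀ n : ℕ, 2 ≤ n → ∀ f : (Fin n → Pref A) → A,
    IsRule D f → StrategyProof D f → Dictatorship D f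

/-- A tops-only domain. -/
def TopsOnlyDomain (D : Set (Pref A)) : Prop :=
  ∀ n : ℕ, 2 ≤ n → ∀ f : (Fin n → Pref A) → A,
    IsRule D f → StrategyProof D f → TopsOnly D f

/-- Adjacency of two alternatives relative to the domain `D`. -/
def DomAdjacent (D : Set (Pref A)) (a b : A) : Prop :=
  ∃ P ∈ D, ∃ P' ∈ D, peak P = a ∧ second P = b ∧ peak P' = b ∧ second P' = a ∧
    ∀ k : ℕ, 2 ≤ k → rk P k = rk P' k

/-- The adjacency graph `G_∼` of the domain `D`. -/
noncomputable def adjGraph (D : Set (Pref A)) : SimpleGraph A :=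
  SimpleGraph.fromRel (DomAdjacent D)

/-- Path-connectedness of the domain. -/
def PathConnectedDom (D : Set (Pref A)) : Prop := (adjGraph D).Connected

/-- Diversity: the domain contains two completely reversed preferences. -/
def Diversity (D : Set (Pref A)) : Prop := ∃ P ∈ D, ∃ P' ∈ D, Reversed P P'

/-- `S(D^a)`: the set of alternatives second-ranked in some preference of `D` with peak `a`. -/
def secondsSet (D : Set (Pref A)) (a : A) : Set A := {b | ∃ P ∈ D, peak P = a ∧ second P = b}

/-- Leaf symmetry. -/
def LeafSymmetry (D : Set (Pref A)) : Prop :=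
  ∀ x : A, (∃! y, (adjGraph D).Adj x y) →
    (∃ u ∈ secondsSet D x, ∃ v ∈ secondsSet D x, u ≠ v) →
    ∃ z ∈ secondsSet D x, ¬ (adjGraph D).Adj x z ∧ x ∈ secondsSet D z

/-- Unidimensionality: path-connectedness, diversity and leaf symmetry. -/
def Unidimensional (D : Set (Pref A)) : Prop :=
  PathConnectedDom D ∧ Diversity D ∧ LeafSymmetry D

/-- The unique seconds property. -/
def UniqueSeconds (D : Set (Pref A)) : Prop := ∃ x b : A, secondsSet D x = {b}

/-- Minimal richness. -/
def MinimallyRich (D : Set (Pref A)) : Prop := ∀ a : A, ∃ P ∈ D, peak P = a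

/-- The vertex set `⟨x, y|T⟩` of the (in a tree, unique) shortest path between `x` and `y`. -/
def intv (T : SimpleGraph A) (x y : A) : Set A :=
  {z | T.dist x z + T.dist z y = T.dist x y}

/-- `a'` is the projection of `a` onto `B` in `T`. -/
def IsProjPt (T : SimpleGraph A) (B : Set A) (a a' : A) : Prop :=
  a' ∈ B ∧ ∀ b ∈ B, a' ∈ intv T a b

/-- The projection `Proj(a, B)` of `a` onto a path-closed set `B` in the tree `T`. -/
noncomputable def projOn (T : SimpleGraph A) (B : Set A) (a : A) : A :=
  if h : ∃ a', IsProjPt T B a a' then h.choose else a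

/-- `Γ(P)`: the vertex set of the minimal subtree of `T` spanning all the peaks. -/
def gammaSet (T : SimpleGraph A) {n : ℕ} (P : Fin n → Pref A) : Set A :=
  {c | ∃ i j : Fin n, c ∈ intv T (peak (P i)) (peak (P j))}

/-- The projection rule on `T` w.r.t. `xbar`. -/
noncomputable def projRule (T : SimpleGraph A) (xbar : A) {n : ℕ}
    (P : Fin n → Pref A) : A :=
  projOn T (gammaSet T P) xbar

/-- Single-peakedness on a tree. -/
def SinglePeaked (T : SimpleGraph A) (P : Pref A) : Prop :=
  ∀ c d : A, c ≠ d → c ∈ intv T (peak P) d → prefers P c d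

/-- Semi-single-peakedness on `T` w.r.t. the threshold `xbar`. -/
def SemiSP (T : SimpleGraph A) (xbar : A) (P : Pref A) : Prop :=
  (∀ c d : A, c ∈ intv T (peak P) xbar → d ∈ intv T (peak P) xbar → c ≠ d →
    c ∈ intv T (peak P) d → prefers P c d) ∧
  (∀ c : A, c ∉ intv T (peak P) xbar →
    prefers P (projOn T (intv T (peak P) xbar) c) c)

/-- A semi-single-peaked domain. -/
def SemiSPDomain (D : Set (Pref A)) : Prop :=
  ∃ (T : SimpleGraph A) (xbar : A), T.IsTree ∧
    D ⊆ {P | SemiSP T xbar P} ∧ (adjGraph D).Connected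

/-- `A^{a⇀b}`: the alternatives whose path to `b` goes through `a`. -/
def sideSet (T : SimpleGraph A) (a b : A) : Set A := {z | a ∈ intv T z b}

/-- `x = max^P(B)`: `x` is `P`'s best alternative of `B`. -/
def IsBestOf (P : Pref A) (x : A) (B : Set A) : Prop :=
  x ∈ B ∧ ∀ y ∈ B, y ≠ x → prefers P x y

/-- `a` and `b` are dual-thresholds in the tree `T`. -/
def DualThresholds (T : SimpleGraph A) (a b : A) : Prop :=
  a ≠ b ∧ ∀ c : A, c ∉ intv T a b →
    projOn T (intv T a b) c = a ∨ projOn T (intv T a b) c = b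

/-- An `(a,b)`-semi-hybrid preference on `T`. -/
def SemiHybridPref (T : SimpleGraph A) (a b : A) (P : Pref A) : Prop :=
  (peak P ∈ sideSet T a b \ {a} → SemiSP T a P ∧ IsBestOf P b (sideSet T b a)) ∧
  (peak P ∈ sideSet T b a \ {b} → SemiSP T b P ∧ IsBestOf P a (sideSet T a b)) ∧
  (peak P ∈ intv T a b → IsBestOf P a (sideSet T a b) ∧ IsBestOf P b (sideSet T b a))

/-- `x` is a leaf of the subgraph of `G` induced on `B`. -/
def IsLeafOn (G : SimpleGraph A) (B : Set A) (x : A) : Prop :=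
  x ∈ B ∧ ∃! y, y ∈ B ∧ G.Adj x y

/-- `D` is an `(a,b)`-semi-hybrid domain on the tree `T`. -/
def SemiHybridDomainOn (D : Set (Pref A)) (T : SimpleGraph A) (a b : A) : Prop :=
  T.IsTree ∧ DualThresholds T a b ∧ D ⊆ {P | SemiHybridPref T a b P} ∧
  (adjGraph D).Connected ∧
  (¬ ∃ (T' : SimpleGraph A) (a' b' : A), T'.IsTree ∧ DualThresholds T' a' b' ∧
      D ⊆ {P | SemiHybridPref T' a' b' P} ∧ intv T' a' b' ⊂ intv T a b) ∧
  ((adjGraph D).IsTree →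
    ∀ x : A, IsLeafOn (adjGraph D) (intv T a b) x →
      ∃ P ∈ D, ¬ SemiSP (adjGraph D) x P)

/-- `D` is a semi-hybrid domain. -/
def SemiHybridDomain (D : Set (Pref A)) : Prop :=
  ∃ (T : SimpleGraph A) (a b : A), SemiHybridDomainOn D T a b

/-- An `(a,b)`-hybrid preference on `T`. -/
def HybridPref (T : SimpleGraph A) (a b : A) (P : Pref A) : Prop :=
  (∀ y z : A, ((y ∈ sideSet T a b ∧ z ∈ sideSet T a b) ∨
      (y ∈ sideSet T b a ∧ z ∈ sideSet T b a)) → y ≠ z →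
    y ∈ intv T (peak P) z → prefers P y z) ∧
  (peak P ∈ sideSet T a b \ {a} → IsBestOf P a (intv T a b)) ∧
  (peak P ∈ sideSet T b a \ {b} → IsBestOf P b (intv T a b))

/-- `D` is an `(a,b)`-hybrid domain on the tree `T`. -/
def HybridDomainOn (D : Set (Pref A)) (T : SimpleGraph A) (a b : A) : Prop :=
  T.IsTree ∧ DualThresholds T a b ∧ D ⊆ {P | HybridPref T a b P} ∧
  (adjGraph D).Connected ∧
  (¬ ∃ (T' : SimpleGraph A) (a' b' : A), T'.IsTree ∧ DualThresholds T' a' b' ∧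
      D ⊆ {P | HybridPref T' a' b' P} ∧ intv T' a' b' ⊂ intv T a b) ∧
  3 ≤ (intv T a b).ncard

/-- `f` is an `(a,b)`-hybrid rule on the tree `T`. -/
def IsHybridRule (D : Set (Pref A)) {n : ℕ} (f : (Fin n → Pref A) → A)
    (T : SimpleGraph A) (a b : A) : Prop :=
  T.IsTree ∧ DualThresholds T a b ∧ 3 ≤ (intv T a b).ncard ∧
  ∃ i : Fin n, ∀ P : Fin n → Pref A, InDom D P →
    (peak (P i) ∈ intv T a b → f P = peak (P i)) ∧
    (peak (P i) ∈ sideSet T a b \ {a} → f P = projOn T (gammaSet T P) a) ∧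
    (peak (P i) ∈ sideSet T b a \ {b} → f P = projOn T (gammaSet T P) b)

/-- The PNT rule on `T` w.r.t. the edge `(x, y)`, with the two distinguished voters `i, j`. -/
noncomputable def pntRule (T : SimpleGraph A) (x y : A) {n : ℕ} (i j : Fin n)
    (P : Fin n → Pref A) : A :=
  if peak (P i) ∈ sideSet T y x then peak (P i)
  else if peak (P j) ∈ sideSet T x y then projOn T (gammaSet T P) x
  else if prefers (P j) x y then x else y

/-- `(x, y)` is a critical spot in `T` for the domain `D`. -/
def CriticalSpot (D : Set (Pref A)) (T : SimpleGraph A) (x y : A) : Prop :=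
  T.Adj x y ∧
  (∀ P ∈ D, peak P ∈ sideSet T x y → SemiSP T y P) ∧
  (∀ P ∈ D, peak P ∈ sideSet T y x → IsBestOf P x (sideSet T x y)) ∧
  (∃ P ∈ D, ∃ P' ∈ D, peak P = peak P' ∧ peak P ∈ sideSet T y x ∧
    prefers P y x ∧ prefers P' x y)

/-- `x` is a path in the graph `G` (pairwise distinct, consecutive vertices adjacent). -/
def IsPathIn (G : SimpleGraph A) {v : ℕ} (x : Fin v → A) : Prop :=
  Function.Injective x ∧
  ∀ (k : ℕ) (h : k + 1 < v), G.Adj (x ⟨k, Nat.lt_of_succ_lt h⟩) (x ⟨k + 1, h⟩)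

/-- `x` is a cycle in the graph `G`. -/
def IsCycleIn (G : SimpleGraph A) {v : ℕ} (x : Fin v → A) : Prop :=
  Function.Injective x ∧
  (∀ (k : ℕ) (h : k + 1 < v), G.Adj (x ⟨k, Nat.lt_of_succ_lt h⟩) (x ⟨k + 1, h⟩)) ∧
  ∀ (h : 0 < v), G.Adj (x ⟨v - 1, Nat.sub_lt h Nat.one_pos⟩) (x ⟨0, h⟩)

/-- The line `L^A` induced by the ranking of the preference `P`. -/
noncomputable def lineOf (P : Pref A) : SimpleGraph A :=
  SimpleGraph.fromRel (fun a b =>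
    ∃ k : ℕ, k + 1 < Fintype.card A ∧ rk P k = a ∧ rk P (k + 1) = b)

/-- The median of three natural numbers. -/
def med3 (a b c : ℕ) : ℕ := max (min a b) (min (max a b) c)

/-- The two-voter profile in which voter `i` reports `Pi` and the other voter reports `Q`. -/
noncomputable def prof2 (i : Fin 2) (Pi Q : Pref A) : Fin 2 → Pref A :=
  Function.update (fun _ => Q) i Pi

/-!
On a tops-only domain an anonymous rule depends only on the peaks, and comparing one voter with
peak `u` against all the others with peak `v` gives a two-voter rule `g` on peaks. If `g u v = v`
across an edge `uv` of the adjacency graph, then among the profiles of `u`s and `v`s some voter is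
pivotal. The peaks with which this voter secures `u` meet their complement only along `uv`, and
their owners rank `u` above `v`. Applied to `uv` or to `vu` this makes every edge a bridge, and it
leaves open only, for one direction of each edge, how the voters on the other side rank its
endpoints.

If some preference with its peak there ranked the far endpoint above the near one, then letting a
second voter choose between the two, whenever the first peak is on the settled side and the second
is not, would extend `g` to a strategy-proof rule that reads more than the peaks; this goes by
induction on the settled side. Hence every preference ranks the endpoint of each edge nearer to its
peak above the other one. The two reversed preferences then have their peaks on different sides of
every edge, so each edge cuts off an initial segment of both and the graph is the line `L^A`.
Conversely, the rule choosing the leftmost peak is anonymous and strategy-proof on the line.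
-/

section Cuts

variable {V : Type*} {G : SimpleGraph V} {S S' T : Set V} {u v : V}

/-- `uv` is the only edge of `G` joining `S` to its complement. In a connected graph this says that
`uv` is a bridge and `S` is the component of `u` after its deletion. -/
structure IsCut (G : SimpleGraph V) (S : Set V) (u v : V) : Prop where
  adj : G.Adj u v
  mem_left : u ∈ S
  right_notMem : v ∉ S
  eq_of_adj : ∀ ⦃p p'⦄, G.Adj p p' → p ∈ S → p' ∉ S → p = u ∧ p' = v

lemma exists_adj_mem_notMem_of_preconnected (hG : G.Preconnected) (hu : u ∈ S) (hv : v ∉ S) :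
    ∃ p p', G.Adj p p' ∧ p ∈ S ∧ p' ∉ S := by
  obtain ⟨w⟩ := hG u v
  obtain ⟨d, -, hd, hd'⟩ := w.exists_boundary_dart S hu hv
  exact ⟨d.fst, d.snd, d.adj, hd, hd'⟩

lemma mem_of_preconnected_of_adj_closed (hG : G.Preconnected) (hu : u ∈ S)
    (hS : ∀ p p', G.Adj p p' → p ∈ S → p' ∈ S) (v : V) : v ∈ S := by
  by_contra hv
  obtain ⟨p, p', hpp', hp, hp'⟩ := exists_adj_mem_notMem_of_preconnected hG hu hv
  exact hp' (hS p p' hpp' hp)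

namespace IsCut

lemma compl (h : IsCut G S u v) : IsCut G Sᶜ v u where
  adj := h.adj.symm
  mem_left := h.right_notMem
  right_notMem := not_not.mpr h.mem_left
  eq_of_adj _ _ hpp' hp hp' := (h.eq_of_adj hpp'.symm (not_not.mp hp') hp).symm

lemma induction (hS : IsCut G S u v) (hG : G.Preconnected) {Q : V → Prop} {c p : V}
    (hc : c ∈ S) (hQc : Q c) (hp : p ∈ S)
    (step : ∀ ⦃p p'⦄, G.Adj p p' → p ∈ S → p' ∈ S → Q p → Q p') : Q p := by
  have iff_left : ∀ p, p ∈ S → (Q p ↔ Q u) := by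
    refine mem_of_preconnected_of_adj_closed (S := {p | p ∈ S → (Q p ↔ Q u)}) hG
      (fun _ => Iff.rfl) fun p p' hpp' ih hp' => ?_
    by_cases hp : p ∈ S
    · exact ⟨fun h => (ih hp).1 (step hpp'.symm hp' hp h), fun h => step hpp' hp hp' ((ih hp).2 h)⟩
    · rw [(hS.eq_of_adj hpp'.symm hp' hp).1]
  exact (iff_left p hp).2 ((iff_left c hc).1 hQc)

lemma subset (hS : IsCut G S u v) (hS' : IsCut G S' u v) (hG : G.Preconnected) : S ⊆ S' := by
  intro p hp
  refine hS.induction hG hS.mem_left hS'.mem_left hp fun q q' hqq' _ hq'S hq => ?_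
  by_contra hq'
  exact hS.right_notMem ((hS'.eq_of_adj hqq' hq hq').2 ▸ hq'S)

lemma eq (hS : IsCut G S u v) (hS' : IsCut G S' u v) (hG : G.Preconnected) : S = S' :=
  (hS.subset hS' hG).antisymm (hS'.subset hS hG)

lemma compl_subset_of_mem {w w' p : V} (hS : IsCut G S u v) (hT : IsCut G T w' w)
    (hG : G.Preconnected) (hw : w ∈ S) (hp : p ∉ S) (hpT : p ∈ T) : Sᶜ ⊆ T := by
  intro q hq
  refine hS.compl.induction hG hp hpT hq fun r r' hrr' _ hr'S hr => ?_
  by_contra hr'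
  exact hr'S ((hT.eq_of_adj hrr' hr hr').2 ▸ hw)

end IsCut

lemma exists_isCut_mem_of_ne (hG : G.Preconnected)
    (hcut : ∀ ⦃u v⦄, G.Adj u v → ∃ S, IsCut G S u v) {w p : V} (hwp : w ≠ p) :
    ∃ w' T, IsCut G T w' w ∧ p ∈ T := by
  suffices h : p = w ∨ ∃ w' T, IsCut G T w' w ∧ p ∈ T from h.resolve_left hwp.symm
  refine mem_of_preconnected_of_adj_closed (S := {p | p = w ∨ ∃ w' T, IsCut G T w' w ∧ p ∈ T})
    hG (Or.inl rfl) ?_ p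
  rintro q q' hqq' (rfl | ⟨w', T, hT, hq⟩)
  · obtain ⟨T, hT⟩ := hcut hqq'.symm
    exact Or.inr ⟨q', T, hT, hT.mem_left⟩
  · by_cases hq' : q' ∈ T
    · exact Or.inr ⟨w', T, hT, hq'⟩
    · exact Or.inl (hT.eq_of_adj hqq' hq hq').2

end Cuts

variable {α : Type*} [Fintype α]

section Preferences

variable {P P' : Pref α} {a b x y : α} {X : Set α}

lemma prefers_of_le_of_ne (h : P.symm a ≤ P.symm b) (hab : a ≠ b) : prefers P a b :=
  h.lt_of_ne (P.symm.injective.ne hab)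

lemma eq_or_prefers_iff_le : a = b ∨ prefers P a b ↔ P.symm a ≤ P.symm b := by
  rw [le_iff_eq_or_lt, P.symm.injective.eq_iff, prefers]

lemma Reversed.symm (h : Reversed P P') : Reversed P' P := fun a b => (h b a).symm

lemma Reversed.le_iff (h : Reversed P P') :
    P.symm a ≤ P.symm b ↔ P'.symm b ≤ P'.symm a := by
  rw [← not_lt, ← not_lt]
  exact not_congr (h b a)

lemma IsBestOf.le (h : IsBestOf P x X) (ha : a ∈ X) : P.symm x ≤ P.symm a :=
  eq_or_prefers_iff_le.1 ((eq_or_ne x a).imp_right fun hxa => h.2 a ha hxa.symm)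

lemma exists_isBestOf (P : Pref α) (hX : X.Nonempty) : ∃ c, IsBestOf P c X := by
  obtain ⟨c, hc, hmin⟩ := Set.exists_min_image X P.symm X.toFinite hX
  exact ⟨c, hc, fun d hd hdc => prefers_of_le_of_ne (hmin d hd) hdc.symm⟩

/-- The alternative of `{x, y}` that `P` prefers. -/
noncomputable def betterOf (P : Pref α) (x y : α) : α := if prefers P x y then x else y

lemma betterOf_eq_or (P : Pref α) (x y : α) : betterOf P x y = x ∨ betterOf P x y = y :=
  ite_eq_or_eq _ _ _

lemma betterOf_le_left (P : Pref α) (x y : α) : P.symm (betterOf P x y) ≤ P.symm x := by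
  unfold betterOf
  split_ifs with h
  · exact le_rfl
  · exact not_lt.1 h

lemma betterOf_le_right (P : Pref α) (x y : α) : P.symm (betterOf P x y) ≤ P.symm y := by
  unfold betterOf
  split_ifs with h
  · exact h.le
  · exact le_rfl

lemma betterOf_eq_right_iff (hxy : x ≠ y) : betterOf P x y = y ↔ prefers P y x := by
  rw [betterOf, ite_eq_right_iff, imp_iff_not hxy, prefers, not_lt]
  exact ⟨fun h => prefers_of_le_of_ne h hxy.symm, le_of_lt⟩

lemma strategyProof_fin_two {D : Set (Pref α)} {φ : Pref α → Pref α → α}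
    (h₀ : ∀ P ∈ D, ∀ P' Q, P.symm (φ P Q) ≤ P.symm (φ P' Q))
    (h₁ : ∀ Q ∈ D, ∀ P Q', Q.symm (φ P Q) ≤ Q.symm (φ P Q')) :
    StrategyProof D (fun R : Fin 2 → Pref α => φ (R 0) (R 1)) := by
  intro R hR i Q _
  rw [eq_or_prefers_iff_le]
  fin_cases i
  · simpa using h₀ (R 0) (hR 0) Q (R 1)
  · simpa using h₁ (R 1) (hR 1) (R 0) Q

variable [Nonempty α]

lemma rk_symm (P : Pref α) (a : α) : rk P (P.symm a) = a := by
  simp [rk]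

lemma symm_rk (P : Pref α) {k : ℕ} (hk : k < Fintype.card α) : (P.symm (rk P k) : ℕ) = k := by
  simp [rk, hk]

lemma symm_peak (P : Pref α) : (P.symm (peak P) : ℕ) = 0 := symm_rk P Fintype.card_pos

lemma peak_le (P : Pref α) (a : α) : P.symm (peak P) ≤ P.symm a := by
  rw [Fin.le_def, symm_peak]
  exact Nat.zero_le _

lemma symm_eq_of_rk_eq (hk : ∀ k, 2 ≤ k → rk P k = rk P' k) (ha : 2 ≤ (P.symm a : ℕ)) :
    P'.symm a = P.symm a := by
  have h := hk _ ha
  rw [rk_symm] at h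
  exact Fin.ext ((congrArg (fun b => (P'.symm b : ℕ)) h).trans (symm_rk P' (P.symm a).isLt))

lemma eq_peak_and_eq_second_of_prefers (hk : ∀ k, 2 ≤ k → rk P k = rk P' k)
    (hab : prefers P a b) (hba : prefers P' b a) : a = peak P ∧ b = second P := by
  have hab' : (P.symm a : ℕ) < P.symm b := hab
  have hba' : (P'.symm b : ℕ) < P'.symm a := hba
  have hb : (P.symm b : ℕ) < 2 := by
    by_contra! hb
    rw [symm_eq_of_rk_eq hk hb] at hba'
    rw [symm_eq_of_rk_eq (fun k h => (hk k h).symm) (hb.trans hba'.le)] at hab'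
    omega
  have ha0 : (P.symm a : ℕ) = 0 := by omega
  have hb1 : (P.symm b : ℕ) = 1 := by omega
  exact ⟨by rw [peak, ← ha0, rk_symm], by rw [second, ← hb1, rk_symm]⟩

end Preferences

variable [Nonempty α] {D : Set (Pref α)} {u v x y : α} {X : Set α}

lemma domAdjacent_of_adj (h : (adjGraph D).Adj u v) : DomAdjacent D u v := by
  rcases (SimpleGraph.fromRel_adj _ _ _).1 h with ⟨-, h | ⟨P, hP, P', hP', h₁, h₂, h₃, h₄, hk⟩⟩
  · exact h
  · exact ⟨P', hP', P, hP, h₃, h₄, h₁, h₂, fun k h => (hk k h).symm⟩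

lemma minimallyRich_of_preconnected (hD : D.Nonempty) (hG : (adjGraph D).Preconnected) :
    MinimallyRich D := by
  intro a
  cases subsingleton_or_nontrivial α
  · obtain ⟨P, hP⟩ := hD
    exact ⟨P, hP, Subsingleton.elim _ _⟩
  · obtain ⟨b, hab⟩ := hG.exists_adj_of_nontrivial a
    obtain ⟨P, hP, -, -, hPa, -⟩ := domAdjacent_of_adj hab
    exact ⟨P, hP, hPa⟩

/-- Strategy-proofness of `h : α → α`, which selects an alternative from the peak of a single
voter, the reports of the others being fixed: naming one's own peak is always optimal. -/
def Truthful (D : Set (Pref α)) (h : α → α) : Prop :=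
  ∀ P ∈ D, ∀ a, P.symm (h (peak P)) ≤ P.symm (h a)

namespace Truthful

variable {h : α → α}

lemma eq_or_eq_of_adj (hh : Truthful D h) (huv : (adjGraph D).Adj u v) :
    h v = h u ∨ h u = u ∧ h v = v := by
  obtain ⟨P, hP, P', hP', rfl, rfl, hP'v, -, hk⟩ := domAdjacent_of_adj huv
  refine or_iff_not_imp_left.2 fun hne => ?_
  refine eq_peak_and_eq_second_of_prefers hk
    (prefers_of_le_of_ne (hh P hP _) (Ne.symm hne)) (prefers_of_le_of_ne ?_ hne)
  rw [← hP'v]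
  exact hh P' hP' _

lemma mem_of_isCut (hh : Truthful D h) (hG : (adjGraph D).Preconnected)
    (hX : IsCut (adjGraph D) X x y) {c p : α} (hc : c ∈ X) (hhc : h c ∈ X) (hp : p ∈ X) :
    h p ∈ X := by
  refine hX.induction hG (Q := fun p => h p ∈ X) hc hhc hp fun q q' hqq' _ hq' ih => ?_
  rcases hh.eq_or_eq_of_adj hqq' with heq | ⟨-, heq⟩
  · rwa [heq]
  · rwa [heq]

lemma eq_of_isCut_of_notMem (hh : Truthful D h) (hG : (adjGraph D).Preconnected)
    (hX : IsCut (adjGraph D) X x y) {c p : α} (hc : c ∈ X) (hhc : h c ∉ X) (hp : p ∈ X) :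
    h p = h c := by
  refine hX.induction hG (Q := fun p => h p = h c) hc rfl hp fun q q' hqq' hq _ ih => ?_
  rcases hh.eq_or_eq_of_adj hqq' with heq | ⟨heq, -⟩
  · rw [heq, ih]
  · exact absurd hq (by rwa [← heq, ih])

end Truthful

/-- A unanimous two-voter rule on peaks in which neither voter gains by misreporting. -/
structure IsTwoVoterRule (D : Set (Pref α)) (g : α → α → α) : Prop where
  unanimous : ∀ a, g a a = a
  truthful_left : ∀ c, Truthful D fun a => g a c
  truthful_right : ∀ c, Truthful D (g c)

namespace IsTwoVoterRule

variable {g : α → α → α}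

lemma swap (hg : IsTwoVoterRule D g) : IsTwoVoterRule D (Function.swap g) where
  unanimous := hg.unanimous
  truthful_left := hg.truthful_right
  truthful_right := hg.truthful_left

lemma eq_left_or_eq_right_of_adj (hg : IsTwoVoterRule D g) (huv : (adjGraph D).Adj u v) :
    g u v = u ∨ g u v = v := by
  rcases (hg.truthful_left v).eq_or_eq_of_adj huv with h | h
  · exact Or.inr (h ▸ hg.unanimous v)
  · exact Or.inl h.1

lemma eq_right_of_adj_of_adj (hg : IsTwoVoterRule D g) {w : α} (huv : (adjGraph D).Adj u v)
    (huw : (adjGraph D).Adj u w) (hwv : w ≠ v) (h : g u v = v) : g w u = u := by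
  have hgwv : g w v = v := by
    rcases (hg.truthful_left v).eq_or_eq_of_adj huw with heq | ⟨heq, -⟩
    · rw [heq, h]
    · exact absurd (h.symm.trans heq) huv.ne'
  refine (hg.eq_left_or_eq_right_of_adj huw.symm).resolve_left fun hgwu => ?_
  rcases (hg.truthful_right w).eq_or_eq_of_adj huv with heq | ⟨heq, -⟩
  · exact hwv (by rw [← hgwu, ← heq, hgwv])
  · exact huw.ne' (hgwu.symm.trans heq)

lemma eq_left_of_mem (hg : IsTwoVoterRule D g) (hG : (adjGraph D).Preconnected)
    (hX : IsCut (adjGraph D) X x y) (hyx : g y x = y) {c : α} (hc : c ∈ X) : g x c = x := by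
  refine hX.induction hG (Q := fun c => g x c = x) hX.mem_left (hg.unanimous x) hc
    fun p p' hpp' _ hp' ih => ?_
  by_cases hpx : p = x
  · subst hpx
    exact hg.swap.eq_right_of_adj_of_adj hX.adj hpp' (ne_of_mem_of_not_mem hp' hX.right_notMem) hyx
  · rcases (hg.truthful_right x).eq_or_eq_of_adj hpp' with heq | ⟨heq, -⟩
    · rw [heq, ih]
    · exact absurd (heq.symm.trans ih) hpx

end IsTwoVoterRule

/-- A two-voter rule `g` that behaves as if `g u v` were the outcome of a rule at which one voter
has peak `u` and all the others have peak `v`: a larger group supporting `u` cannot hurt `u`, and if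
the lone voter is overruled across an edge then a pivotal voter reveals that edge to be a bridge. -/
structure IsLoneVoterRule (D : Set (Pref α)) (g : α → α → α) : Prop
    extends IsTwoVoterRule D g where
  eq_left_of_eq_left : ∀ ⦃u v⦄, (adjGraph D).Adj u v → g u v = u → g v u = u
  exists_isCut_of_eq_right : ∀ ⦃u v⦄, (adjGraph D).Adj u v → g u v = v →
    ∃ S, IsCut (adjGraph D) S u v ∧ ∀ P ∈ D, peak P ∈ S → prefers P u v

namespace IsLoneVoterRule

variable {g : α → α → α} {P : Pref α}

lemma exists_isCut (hg : IsLoneVoterRule D g) (huv : (adjGraph D).Adj u v) :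
    ∃ S, IsCut (adjGraph D) S u v := by
  rcases hg.eq_left_or_eq_right_of_adj huv with h | h
  · obtain ⟨S, hS, -⟩ := hg.exists_isCut_of_eq_right huv.symm (hg.eq_left_of_eq_left huv h)
    exact ⟨Sᶜ, hS.compl⟩
  · obtain ⟨S, hS, -⟩ := hg.exists_isCut_of_eq_right huv h
    exact ⟨S, hS⟩

lemma prefers_of_isCut (hg : IsLoneVoterRule D g) (hG : (adjGraph D).Preconnected)
    (hX : IsCut (adjGraph D) X x y) (hxy : g x y = y) (hP : P ∈ D) (hPX : peak P ∈ X) :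
    prefers P x y := by
  obtain ⟨S, hS, hpref⟩ := hg.exists_isCut_of_eq_right hX.adj hxy
  exact hpref P hP (hX.eq hS hG ▸ hPX)

end IsLoneVoterRule

lemma IsCut.isBestOf {G : SimpleGraph α} {P : Pref α} (hX : IsCut G X x y) (hG : G.Preconnected)
    (hcut : ∀ ⦃u v⦄, G.Adj u v → ∃ S, IsCut G S u v) (hPX : peak P ∉ X)
    (h : ∀ ⦃c c' T⦄, IsBestOf P c X → c' ∈ X → IsCut G T c' c → peak P ∈ T → prefers P c' c) :
    IsBestOf P x X := by
  obtain ⟨c, hc⟩ := exists_isBestOf P ⟨x, hX.mem_left⟩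
  suffices hcx : c = x from hcx ▸ hc
  by_contra hcx
  obtain ⟨c', T, hT, hPT⟩ := exists_isCut_mem_of_ne hG hcut (ne_of_mem_of_not_mem hc.1 hPX)
  have hc' : c' ∈ X := by
    by_contra hc'
    exact hcx (hX.eq_of_adj hT.adj.symm hc.1 hc').1
  exact (h hc hc' hT hPT).not_ge (hc.le hc')

namespace IsLoneVoterRule

variable {g : α → α → α} {P : Pref α}

lemma isBestOf_of_isCut_of_eq_right (hg : IsLoneVoterRule D g) (hG : (adjGraph D).Preconnected)
    (hX : IsCut (adjGraph D) X x y) (hxy : g x y = y) (hP : P ∈ D) (hPX : peak P ∈ X) :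
    IsBestOf P y Xᶜ := by
  refine hX.compl.isBestOf hG (fun _ _ => hg.exists_isCut) (not_not.mpr hPX)
    fun c c' T hc _ hT hPT => ?_
  have hx : g x c ∈ Xᶜ := (hg.truthful_right x).mem_of_isCut hG hX.compl hX.right_notMem
    (hxy.symm ▸ hX.right_notMem : g x y ∈ Xᶜ) hc.1
  have hPc : g (peak P) c = c := by
    refine P.symm.injective (le_antisymm ?_ (hc.le ?_))
    · simpa only [hg.unanimous] using hg.truthful_left c P hP c
    · rwa [(hg.truthful_left c).eq_of_isCut_of_notMem hG hX hX.mem_left hx hPX]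
  have hc'c : g c' c = c := by
    rw [(hg.truthful_left c).eq_of_isCut_of_notMem hG hT hPT (hPc.symm ▸ hT.right_notMem)
      hT.mem_left, hPc]
  exact hg.prefers_of_isCut hG hT hc'c hP hPT

end IsLoneVoterRule

section Gate

/-- The two-voter social choice function that selects the first voter's peak when it lies outside
`X`, applies `g` when both peaks lie in `X`, and otherwise lets the second voter choose between `x`
and `y`. It reads more than the second voter's peak. -/
noncomputable def gateRule (g : α → α → α) (X : Set α) (x y : α) (P Q : Pref α) : α :=
  if peak P ∈ X then if peak Q ∈ X then g (peak P) (peak Q) else betterOf Q x y else peak P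

variable {g : α → α → α} {P Q Q' : Pref α}

lemma gateRule_of_mem_of_mem (hP : peak P ∈ X) (hQ : peak Q ∈ X) :
    gateRule g X x y P Q = g (peak P) (peak Q) := by
  rw [gateRule, if_pos hP, if_pos hQ]

lemma gateRule_of_mem_of_notMem (hP : peak P ∈ X) (hQ : peak Q ∉ X) :
    gateRule g X x y P Q = betterOf Q x y := by
  rw [gateRule, if_pos hP, if_neg hQ]

lemma gateRule_of_notMem (hP : peak P ∉ X) : gateRule g X x y P Q = peak P := by
  rw [gateRule, if_neg hP]

lemma gateRule_unanimous (hg : IsTwoVoterRule D g) (h : peak P = peak Q) :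
    gateRule g X x y P Q = peak P := by
  by_cases hP : peak P ∈ X
  · rw [gateRule_of_mem_of_mem hP (h ▸ hP), ← h, hg.unanimous]
  · exact gateRule_of_notMem hP

/-- Conditions on a two-voter rule `g` and an edge `xy` leaving `X` under which `gateRule g X x y`
is strategy-proof. -/
structure IsGated (D : Set (Pref α)) (g : α → α → α) (X : Set α) (x y : α) : Prop where
  gate_mem : x ∈ X
  map_mem : ∀ a ∈ X, ∀ c ∈ X, g a c ∈ X
  gate_left : ∀ c ∈ X, g x c = x
  gate_right : ∀ c ∈ X, g c x = x
  prefers_gate : ∀ P ∈ D, peak P ∈ X → prefers P x y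
  isBestOf_compl : ∀ P ∈ D, peak P ∈ X → IsBestOf P y Xᶜ
  isBestOf_gate : ∀ P ∈ D, peak P ∉ X → IsBestOf P x X

namespace IsGated

lemma gateRule_le_left (h : IsGated D g X x y) (hg : IsTwoVoterRule D g) (hP : P ∈ D)
    (P' Q : Pref α) :
    P.symm (gateRule g X x y P Q) ≤ P.symm (gateRule g X x y P' Q) := by
  by_cases hPX : peak P ∈ X
  swap
  · rw [gateRule_of_notMem hPX]
    exact peak_le _ _
  have hxy : P.symm x ≤ P.symm y := (h.prefers_gate P hP hPX).le
  by_cases hP'X : peak P' ∈ X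
  · by_cases hQX : peak Q ∈ X
    · rw [gateRule_of_mem_of_mem hPX hQX, gateRule_of_mem_of_mem hP'X hQX]
      exact hg.truthful_left _ P hP _
    · rw [gateRule_of_mem_of_notMem hPX hQX, gateRule_of_mem_of_notMem hP'X hQX]
  · suffices hle : P.symm (gateRule g X x y P Q) ≤ P.symm y by
      rw [gateRule_of_notMem hP'X]
      exact hle.trans ((h.isBestOf_compl P hP hPX).le hP'X)
    by_cases hQX : peak Q ∈ X
    · rw [gateRule_of_mem_of_mem hPX hQX]
      calc P.symm (g (peak P) (peak Q)) ≤ P.symm (g x (peak Q)) := hg.truthful_left _ P hP x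
        _ = P.symm x := by rw [h.gate_left _ hQX]
        _ ≤ P.symm y := hxy
    · rw [gateRule_of_mem_of_notMem hPX hQX]
      rcases betterOf_eq_or Q x y with hQ | hQ <;> rw [hQ]
      exact hxy

lemma gateRule_le_right (h : IsGated D g X x y) (hg : IsTwoVoterRule D g) (hQ : Q ∈ D)
    (P Q' : Pref α) :
    Q.symm (gateRule g X x y P Q) ≤ Q.symm (gateRule g X x y P Q') := by
  by_cases hPX : peak P ∈ X
  swap
  · rw [gateRule_of_notMem hPX, gateRule_of_notMem hPX]
  by_cases hQX : peak Q ∈ X <;> by_cases hQ'X : peak Q' ∈ X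
  · rw [gateRule_of_mem_of_mem hPX hQX, gateRule_of_mem_of_mem hPX hQ'X]
    exact hg.truthful_right _ Q hQ _
  · rw [gateRule_of_mem_of_mem hPX hQX, gateRule_of_mem_of_notMem hPX hQ'X]
    have hx : Q.symm (g (peak P) (peak Q)) ≤ Q.symm x := by
      simpa only [h.gate_right _ hPX] using hg.truthful_right (peak P) Q hQ x
    rcases betterOf_eq_or Q' x y with hQ' | hQ' <;> rw [hQ']
    · exact hx
    · exact hx.trans (h.prefers_gate Q hQ hQX).le
  · rw [gateRule_of_mem_of_notMem hPX hQX, gateRule_of_mem_of_mem hPX hQ'X]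
    exact (betterOf_le_left Q x y).trans
      ((h.isBestOf_gate Q hQ hQX).le (h.map_mem _ hPX _ hQ'X))
  · rw [gateRule_of_mem_of_notMem hPX hQX, gateRule_of_mem_of_notMem hPX hQ'X]
    rcases betterOf_eq_or Q' x y with hQ' | hQ' <;> rw [hQ']
    · exact betterOf_le_left Q x y
    · exact betterOf_le_right Q x y

lemma prefers_of_topsOnlyDomain (h : IsGated D g X x y) (hg : IsTwoVoterRule D g)
    (htod : TopsOnlyDomain D) (hrich : MinimallyRich D) (hxy : x ≠ y) (hPQ : peak P = peak Q)
    (hP : P ∈ D) (hQ : Q ∈ D) (hPX : peak P ∉ X) (hPyx : prefers P y x) : prefers Q y x := by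
  obtain ⟨R, hR, hRx⟩ := hrich x
  have hRX : peak R ∈ X := hRx ▸ h.gate_mem
  have hto := htod 2 le_rfl (fun R => gateRule g X x y (R 0) (R 1))
    (fun R _ a ha => (gateRule_unanimous hg ((ha 0).trans (ha 1).symm)).trans (ha 0))
    (strategyProof_fin_two (fun _ hP => h.gateRule_le_left hg hP)
      (fun _ hQ => h.gateRule_le_right hg hQ))
    ![R, P] ![R, Q] (by simp [InDom, Fin.forall_fin_two, hR, hP])
    (by simp [InDom, Fin.forall_fin_two, hR, hQ]) (by simp [Fin.forall_fin_two, hPQ])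
  have hbetter : betterOf P x y = betterOf Q x y := by
    rw [← gateRule_of_mem_of_notMem (g := g) hRX hPX,
      ← gateRule_of_mem_of_notMem (g := g) hRX (hPQ ▸ hPX)]
    exact hto
  rwa [← betterOf_eq_right_iff hxy, ← hbetter, betterOf_eq_right_iff hxy]

/-- Across an edge of the complement of `X` two adjacent preferences can only exchange their own
peaks, so the ranking of `y` above `x` spreads from `y` to all of the complement. -/
lemma prefers_of_notMem (h : IsGated D g X x y) (hg : IsTwoVoterRule D g)
    (hG : (adjGraph D).Preconnected) (hX : IsCut (adjGraph D) X x y)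
    (htod : TopsOnlyDomain D) (hrich : MinimallyRich D) (hP : P ∈ D) (hPX : peak P ∉ X) :
    prefers P y x := by
  have hxy : x ≠ y := hX.adj.ne
  refine hX.compl.induction hG (Q := fun p => ∀ P ∈ D, peak P = p → prefers P y x)
    hX.right_notMem ?_ hPX ?_ P hP rfl
  · rintro P - rfl
    exact prefers_of_le_of_ne (peak_le P x) hxy.symm
  · intro p p' hpp' _ hp' ih Q hQ hQp'
    obtain ⟨R, hR, R', hR', hRp, hRp', hR'p', -, hk⟩ := domAdjacent_of_adj hpp'
    have hR'yx : prefers R' y x := by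
      by_contra hn
      have hsecond := (eq_peak_and_eq_second_of_prefers hk (ih R hR hRp)
        (prefers_of_le_of_ne (not_lt.1 hn) hxy)).2
      exact hp' (hsecond.trans hRp' ▸ h.gate_mem)
    exact h.prefers_of_topsOnlyDomain hg htod hrich hxy (hR'p'.trans hQp'.symm) hR' hQ
      (hR'p'.symm ▸ hp') hR'yx

end IsGated

end Gate

namespace IsLoneVoterRule

variable {g : α → α → α} {P : Pref α}

lemma prefers_of_notMem (hg : IsLoneVoterRule D g) (hG : (adjGraph D).Preconnected)
    (htod : TopsOnlyDomain D) (hrich : MinimallyRich D) (hX : IsCut (adjGraph D) X x y)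
    (hP : P ∈ D) (hPX : peak P ∉ X) : prefers P y x := by
  induction X using WellFoundedLT.induction generalizing x y P with
  | ind X ih =>
  rcases hg.eq_left_or_eq_right_of_adj hX.adj.symm with hyx | hyx
  swap
  · exact hg.prefers_of_isCut hG hX.compl hyx hP hPX
  have hxy : g x y = y := hg.eq_left_of_eq_left hX.adj.symm hyx
  have hleft : ∀ c ∈ X, g x c = x := fun c => hg.eq_left_of_mem hG hX hyx
  have hright : ∀ c ∈ X, g c x = x := fun c => hg.swap.eq_left_of_mem hG hX hxy
  have hgated : IsGated D g X x y :=
    { gate_mem := hX.mem_left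
      map_mem := fun a ha c hc => (hg.truthful_left c).mem_of_isCut hG hX hX.mem_left
        ((hleft c hc).symm ▸ hX.mem_left : g x c ∈ X) ha
      gate_left := hleft
      gate_right := hright
      prefers_gate := fun Q hQ => hg.prefers_of_isCut hG hX hxy hQ
      isBestOf_compl := fun Q hQ => hg.isBestOf_of_isCut_of_eq_right hG hX hxy hQ
      isBestOf_gate := fun Q hQ hQX => hX.isBestOf hG (fun _ _ => hg.exists_isCut) hQX
        fun c c' T hc hc' hT hQT => by
          have hTX : Tᶜ ⊆ X :=
            Set.compl_subset_comm.1 (hX.compl_subset_of_mem hT hG hc.1 hQX hQT)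
          exact ih Tᶜ ⟨hTX, fun hXT => hXT hc' hT.mem_left⟩ hT.compl hQ (not_not.mpr hQT) }
  exact hgated.prefers_of_notMem hg.toIsTwoVoterRule hG hX htod hrich hP hPX

end IsLoneVoterRule

section LoneVoter

variable {ι : Type*} [DecidableEq ι]

/-- A unanimous and strategy-proof rule for the voters `ι` that reads only their peaks. -/
structure IsPeakRule (D : Set (Pref α)) (F : (ι → α) → α) : Prop where
  unanimous : ∀ a, F (fun _ => a) = a
  truthful : ∀ w i, Truthful D fun a => F (Function.update w i a)

/-- The outcome of `F` when voter `i` has peak `u` and all the others have peak `v`. -/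
def loneVoter (F : (ι → α) → α) (i : ι) (u v : α) : α := F (Function.update (fun _ => v) i u)

namespace IsPeakRule

variable {F : (ι → α) → α} {i : ι}

lemma truthful_piecewise (hF : IsPeakRule D F) (S : Finset ι) (w : ι → α) :
    Truthful D fun a => F (S.piecewise (fun _ => a) w) := by
  intro P hP a
  induction S using Finset.induction generalizing w with
  | empty => simp only [Finset.piecewise_empty, le_refl]
  | insert j S hj ih =>
    simp only [Finset.piecewise_insert]
    refine le_trans ?_ (hF.truthful (S.piecewise (fun _ => a) w) j P hP a)
    simp only [S.update_piecewise_of_notMem _ _ hj]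
    exact ih _

lemma piecewise_eq_or_eq (hF : IsPeakRule D F) (huv : (adjGraph D).Adj u v) (S : Finset ι) :
    F (S.piecewise (fun _ => v) fun _ => u) = u ∨ F (S.piecewise (fun _ => v) fun _ => u) = v := by
  rcases (hF.truthful_piecewise S fun _ => u).eq_or_eq_of_adj huv with h | h
  · rw [Finset.piecewise_same, hF.unanimous] at h
    exact Or.inl h
  · exact Or.inr h.2

variable [Finite ι]

lemma isTwoVoterRule_loneVoter (hF : IsPeakRule D F) (i : ι) :
    IsTwoVoterRule D (loneVoter F i) where
  unanimous a := by rw [loneVoter, Function.update_eq_self i fun _ => a, hF.unanimous]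
  truthful_left c := hF.truthful _ i
  truthful_right c := by
    have := Fintype.ofFinite ι
    have h := hF.truthful_piecewise {i}ᶜ fun _ => c
    simp only [Finset.piecewise_compl, Finset.piecewise_singleton] at h
    exact h

lemma loneVoter_eq_left_of_eq_left (hF : IsPeakRule D F) {j : ι} (hij : i ≠ j)
    (huv : (adjGraph D).Adj u v) (h : loneVoter F i u v = u) : loneVoter F j v u = u := by
  have := Fintype.ofFinite ι
  have hv : ({i, j}ᶜ : Finset ι).piecewise (fun _ => v) (Function.update (fun _ => v) i u) =
      Function.update (fun _ => v) i u := by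
    ext k
    by_cases hk : k ∈ ({i, j}ᶜ : Finset ι) <;> simp_all
  have hu : ({i, j}ᶜ : Finset ι).piecewise (fun _ => u) (Function.update (fun _ => v) i u) =
      Function.update (fun _ => u) j v := by
    ext k
    by_cases hki : k = i <;> by_cases hkj : k = j <;> simp_all
  have hS := (hF.truthful_piecewise {i, j}ᶜ (Function.update (fun _ => v) i u)).eq_or_eq_of_adj
    huv.symm
  rw [hu, hv] at hS
  rcases hS with hS | hS
  · exact hS.trans h
  · exact hS.2

lemma exists_pivot (hF : IsPeakRule D F) (huv : (adjGraph D).Adj u v) :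
    ∃ (S : Finset ι) (j : ι), j ∉ S ∧
      F (Function.update (S.piecewise (fun _ => v) fun _ => u) j u) = u ∧
      F (Function.update (S.piecewise (fun _ => v) fun _ => u) j v) = v := by
  have := Fintype.ofFinite ι
  by_contra! hpivot
  have hall : ∀ S : Finset ι, F (S.piecewise (fun _ => v) fun _ => u) = u := by
    intro S
    induction S using Finset.induction with
    | empty => rw [Finset.piecewise_empty, hF.unanimous]
    | insert j S hj ih =>
      refine (hF.piecewise_eq_or_eq huv _).resolve_right ?_
      rw [Finset.piecewise_insert]
      refine hpivot S j hj ?_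
      rwa [S.update_piecewise_of_notMem _ _ hj, Function.update_eq_self j fun _ => u]
  have huniv := hall Finset.univ
  rw [Finset.piecewise_univ, hF.unanimous] at huniv
  exact huv.ne' huniv

/-- The alternatives with which a pivotal voter secures `u` form one side of the edge. -/
lemma exists_isCut (hF : IsPeakRule D F) (huv : (adjGraph D).Adj u v)
    (h : ∀ i, loneVoter F i u v = v) :
    ∃ S, IsCut (adjGraph D) S u v ∧ ∀ P ∈ D, peak P ∈ S → prefers P u v := by
  obtain ⟨S, j, hj, hu, hv⟩ := hF.exists_pivot huv
  have htruth := hF.truthful (S.piecewise (fun _ => v) fun _ => u) j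
  set k : α → α := fun p => F (Function.update (S.piecewise (fun _ => v) fun _ => u) j p)
  refine ⟨{p | k p = u}, ⟨huv, hu, fun hvu => huv.ne' (hv.symm.trans hvu), ?_⟩, ?_⟩
  · intro p p' hpp' (hp : k p = u) (hp' : k p' ≠ u)
    obtain ⟨hkp, hkp'⟩ := (htruth.eq_or_eq_of_adj hpp').resolve_left fun heq => hp' (heq.trans hp)
    obtain rfl : u = p := hp.symm.trans hkp
    refine ⟨rfl, by_contra fun hp'v => ?_⟩
    have hlone : loneVoter F j p' u = u :=
      (hF.isTwoVoterRule_loneVoter j).eq_right_of_adj_of_adj huv hpp' hp'v (h j)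
    rcases (hF.truthful_piecewise S (Function.update (fun _ => u) j p')).eq_or_eq_of_adj huv
      with heq | ⟨-, heq⟩ <;> simp only [← S.update_piecewise_of_notMem _ _ hj] at heq
    · rw [Finset.piecewise_same] at heq
      exact hp' (heq.trans hlone)
    · exact hp'v (hkp'.symm.trans heq)
  · intro P hP hPu
    have hle := htruth P hP v
    exact prefers_of_le_of_ne (hPu ▸ hv ▸ hle) huv.ne

lemma isLoneVoterRule_loneVoter [Nontrivial ι] (hF : IsPeakRule D F)
    (hF' : ∀ i j, loneVoter F i = loneVoter F j) (i : ι) :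
    IsLoneVoterRule D (loneVoter F i) where
  toIsTwoVoterRule := hF.isTwoVoterRule_loneVoter i
  eq_left_of_eq_left u v huv h := by
    obtain ⟨j, hj⟩ := exists_ne i
    rw [hF' i j]
    exact hF.loneVoter_eq_left_of_eq_left hj.symm huv h
  exists_isCut_of_eq_right u v huv h := hF.exists_isCut huv fun j => hF' i j ▸ h

end IsPeakRule

variable {n : ℕ} {f : (Fin n → Pref α) → α} {rep : α → Pref α}

lemma isPeakRule_comp (hf : IsRule D f) (hsp : StrategyProof D f) (hto : TopsOnly D f)
    (hrepD : ∀ a, rep a ∈ D) (hrep : ∀ a, peak (rep a) = a) :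
    IsPeakRule D fun w : Fin n → α => f (rep ∘ w) where
  unanimous a := hf _ (fun _ => hrepD a) a fun _ => hrep a
  truthful w i P hP a := by
    have hdom : ∀ R ∈ D, InDom D (Function.update (rep ∘ w) i R) := fun R hR => by
      simpa [InDom, Function.forall_update_iff (rep ∘ w) fun _ Q => Q ∈ D, hR]
        using fun j _ => hrepD (w j)
    have hle := eq_or_prefers_iff_le.1 (hsp _ (hdom P hP) i _ (hrepD a))
    rw [Function.update_idem, Function.update_self] at hle
    simp only [Function.comp_update]
    rwa [hto _ _ (hdom _ (hrepD (peak P))) (hdom P hP) fun j => ?_]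
    rcases eq_or_ne j i with rfl | hj
    · simp only [Function.update_self, hrep]
    · simp only [Function.update_of_ne hj]

lemma exists_isLoneVoterRule (hn : 2 ≤ n) (hrich : MinimallyRich D) (hto : TopsOnly D f)
    (hf : IsRule D f) (hsp : StrategyProof D f) (ha : Anonymous D f) :
    ∃ g, IsLoneVoterRule D g := by
  choose rep hrepD hrep using hrich
  have : Nontrivial (Fin n) := Fin.nontrivial_iff_two_le.2 hn
  refine ⟨_, (isPeakRule_comp hf hsp hto hrepD hrep).isLoneVoterRule_loneVoter ?_ ⟨0, by omega⟩⟩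
  intro i j
  ext u v
  have h := ha (rep ∘ Function.update (fun _ => v) i u) (fun _ => hrepD _) (Equiv.swap i j)
  rw [Function.comp_assoc, Function.update_comp_equiv, Equiv.symm_swap, Equiv.swap_apply_left] at h
  exact h.symm

end LoneVoter

section Line

variable {L P : Pref α} {a b c d p : α}

lemma lineOf_adj : (lineOf L).Adj a b ↔
    (L.symm a + 1 : ℕ) = L.symm b ∨ (L.symm b + 1 : ℕ) = L.symm a := by
  have key : ∀ a b : α, (∃ k, k + 1 < Fintype.card α ∧ rk L k = a ∧ rk L (k + 1) = b) ↔
      (L.symm a + 1 : ℕ) = L.symm b := by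
    refine fun a b => ⟨?_, fun h => ⟨L.symm a, h ▸ (L.symm b).isLt, rk_symm L a, h ▸ rk_symm L b⟩⟩
    rintro ⟨k, hk, rfl, rfl⟩
    rw [symm_rk L hk, symm_rk L (by omega)]
  rw [lineOf, SimpleGraph.fromRel_adj, key, key, and_iff_right_iff_imp]
  rintro h rfl
  omega

lemma dist_le_length_of_walk_lineOf (w : (lineOf L).Walk a b) :
    Nat.dist (L.symm a) (L.symm b) ≤ w.length := by
  induction w with
  | nil => exact (Nat.dist_self _).le
  | cons h w ih =>
    rw [lineOf_adj] at h
    rw [SimpleGraph.Walk.length_cons]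
    simp only [Nat.dist] at ih ⊢
    omega

lemma exists_walk_lineOf_length_eq {k : ℕ} (h : (L.symm a + k : ℕ) = L.symm b) :
    ∃ w : (lineOf L).Walk a b, w.length = k := by
  induction k generalizing a with
  | zero =>
    obtain rfl : a = b := L.symm.injective (Fin.ext h)
    exact ⟨.nil, rfl⟩
  | succ k ih =>
    have hc : (L.symm (rk L (L.symm a + 1)) : ℕ) = L.symm a + 1 :=
      symm_rk L (lt_of_le_of_lt (by omega) (L.symm b).isLt)
    obtain ⟨w, rfl⟩ := ih (a := rk L (L.symm a + 1)) (by omega)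
    exact ⟨.cons (lineOf_adj.2 (Or.inl hc.symm)) w, rfl⟩

lemma dist_lineOf (L : Pref α) (a b : α) :
    (lineOf L).dist a b = Nat.dist (L.symm a) (L.symm b) := by
  wlog hab : (L.symm a : ℕ) ≤ L.symm b generalizing a b
  · rw [SimpleGraph.dist_comm, Nat.dist_comm]
    exact this b a (by omega)
  obtain ⟨w, hw⟩ := exists_walk_lineOf_length_eq (Nat.add_sub_of_le hab)
  obtain ⟨w', hw'⟩ := w.reachable.exists_walk_length_eq_dist
  refine le_antisymm ?_ (hw' ▸ dist_le_length_of_walk_lineOf w')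
  rw [Nat.dist_eq_sub_of_le hab, ← hw]
  exact SimpleGraph.dist_le w

lemma mem_intv_lineOf : c ∈ intv (lineOf L) p d ↔
    L.symm p ≤ L.symm c ∧ L.symm c ≤ L.symm d ∨ L.symm d ≤ L.symm c ∧ L.symm c ≤ L.symm p := by
  change (lineOf L).dist p c + (lineOf L).dist c d = (lineOf L).dist p d ↔ _
  simp only [dist_lineOf, Nat.dist, Fin.le_def]
  omega

end Line

/-- Single-peakedness on the adjacency graph, expressed edge by edge: every edge is the only one
joining its two sides, and every preference ranks the endpoint on the side of its peak above the
other endpoint. -/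
structure IsEdgewiseSinglePeaked (D : Set (Pref α)) : Prop where
  exists_isCut : ∀ ⦃u v⦄, (adjGraph D).Adj u v → ∃ S, IsCut (adjGraph D) S u v
  prefers_of_isCut : ∀ ⦃S u v⦄, IsCut (adjGraph D) S u v →
    ∀ P ∈ D, peak P ∈ S → prefers P u v

lemma IsLoneVoterRule.isEdgewiseSinglePeaked {g : α → α → α} (hg : IsLoneVoterRule D g)
    (hG : (adjGraph D).Preconnected) (htod : TopsOnlyDomain D) (hrich : MinimallyRich D) :
    IsEdgewiseSinglePeaked D where
  exists_isCut _ _ := hg.exists_isCut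
  prefers_of_isCut _ _ _ hS _ hP hPS :=
    hg.prefers_of_notMem hG htod hrich hS.compl hP (not_not.mpr hPS)

namespace IsEdgewiseSinglePeaked

variable {Pl Pu P : Pref α} {c d : α}

lemma isBestOf (hD : IsEdgewiseSinglePeaked D) (hG : (adjGraph D).Preconnected)
    (hX : IsCut (adjGraph D) X x y) (hP : P ∈ D) (hPX : peak P ∈ X) : IsBestOf P y Xᶜ :=
  hX.compl.isBestOf hG hD.exists_isCut (not_not.mpr hPX)
    fun _ _ _ _ _ hT hPT => hD.prefers_of_isCut hT P hP hPT

lemma isCut_setOf_le (hD : IsEdgewiseSinglePeaked D) (hG : (adjGraph D).Preconnected)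
    (hPl : Pl ∈ D) (hPu : Pu ∈ D) (hrev : Reversed Pl Pu) (huv : (adjGraph D).Adj u v)
    (hlt : prefers Pl u v) : IsCut (adjGraph D) {a | Pl.symm a ≤ Pl.symm u} u v := by
  obtain ⟨S, hS⟩ := hD.exists_isCut huv
  have hPlS : peak Pl ∈ S := by
    by_contra hn
    exact lt_asymm hlt (hD.prefers_of_isCut hS.compl Pl hPl hn)
  have hPuS : peak Pu ∉ S := fun hn =>
    lt_asymm hlt ((hrev v u).2 (hD.prefers_of_isCut hS Pu hPu hn))
  suffices h : S = {a | Pl.symm a ≤ Pl.symm u} from h ▸ hS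
  ext a
  refine ⟨fun ha => ?_, fun ha => ?_⟩
  · have hu : IsBestOf Pu u Sᶜᶜ := hD.isBestOf hG hS.compl hPu hPuS
    exact hrev.le_iff.2 (hu.le (not_not.mpr ha))
  · by_contra hn
    exact (hlt.trans_le ((hD.isBestOf hG hS hPl hPlS).le hn)).not_ge ha

lemma prefers_of_le_of_prefers (hD : IsEdgewiseSinglePeaked D) (hG : (adjGraph D).Preconnected)
    (hPl : Pl ∈ D) (hPu : Pu ∈ D) (hrev : Reversed Pl Pu) (hP : P ∈ D)
    (hc : Pl.symm (peak P) ≤ Pl.symm c) (hcd : prefers Pl c d) : prefers P c d := by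
  obtain ⟨p, p', hpp', hpc, hp'c⟩ := exists_adj_mem_notMem_of_preconnected
    (S := {a | Pl.symm a ≤ Pl.symm c}) hG (le_refl (Pl.symm c)) hcd.not_ge
  have hlt : prefers Pl p p' := hpc.trans_lt (not_le.1 hp'c)
  have hS := hD.isCut_setOf_le hG hPl hPu hrev hpp' hlt
  obtain rfl : p = c := by
    by_contra hne
    have hbest := hD.isBestOf hG hS hPl (peak_le Pl p)
    exact hp'c (hbest.le (prefers_of_le_of_ne hpc hne).not_ge)
  exact (hD.prefers_of_isCut hS P hP hc).trans_le ((hD.isBestOf hG hS hP hc).le hcd.not_ge)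

lemma singlePeaked (hD : IsEdgewiseSinglePeaked D) (hG : (adjGraph D).Preconnected)
    (hPl : Pl ∈ D) (hPu : Pu ∈ D) (hrev : Reversed Pl Pu) (hP : P ∈ D) :
    SinglePeaked (lineOf Pl) P := by
  intro c d hcd hc
  rcases mem_intv_lineOf.1 hc with ⟨hpc, hcd'⟩ | ⟨hdc, hcp⟩
  · exact hD.prefers_of_le_of_prefers hG hPl hPu hrev hP hpc (prefers_of_le_of_ne hcd' hcd)
  · exact hD.prefers_of_le_of_prefers hG hPu hPl hrev.symm hP (hrev.le_iff.1 hcp)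
      (prefers_of_le_of_ne (hrev.le_iff.1 hdc) hcd)

end IsEdgewiseSinglePeaked

section LeftmostPeak

variable {n : ℕ} {L : Pref α}

/-- The anonymous rule that selects the reported peak ranked highest by `L`. -/
noncomputable def leftmostPeak (L : Pref α) (P : Fin n → Pref α) : α :=
  rk L (⨅ i, (L.symm (peak (P i)) : ℕ))

lemma leftmostPeak_anonymous (L : Pref α) (D : Set (Pref α)) :
    Anonymous D (leftmostPeak L : (Fin n → Pref α) → α) := fun P _ σ =>
  congrArg (rk L) (σ.iInf_comp (g := fun i => (L.symm (peak (P i)) : ℕ)))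

lemma leftmostPeak_le (L : Pref α) (P : Fin n → Pref α) (i : Fin n) :
    L.symm (leftmostPeak L P) ≤ L.symm (peak (P i)) := by
  have hle : ⨅ i, (L.symm (peak (P i)) : ℕ) ≤ L.symm (peak (P i)) := ciInf_le' _ i
  rwa [Fin.le_def, leftmostPeak, symm_rk L (hle.trans_lt (Fin.isLt _))]

variable [NeZero n]

lemma exists_leftmostPeak_eq (L : Pref α) (P : Fin n → Pref α) :
    ∃ i, leftmostPeak L P = peak (P i) := by
  obtain ⟨i, hi⟩ := exists_eq_ciInf_of_finite (f := fun i => (L.symm (peak (P i)) : ℕ))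
  exact ⟨i, by rw [leftmostPeak, ← hi, rk_symm]⟩

lemma leftmostPeak_isRule (L : Pref α) (D : Set (Pref α)) :
    IsRule D (leftmostPeak L : (Fin n → Pref α) → α) := by
  intro P _ a ha
  obtain ⟨i, hi⟩ := exists_leftmostPeak_eq L P
  rw [hi, ha]

lemma leftmostPeak_strategyProof (hD : D ⊆ {P | SinglePeaked (lineOf L) P}) :
    StrategyProof D (leftmostPeak L : (Fin n → Pref α) → α) := by
  intro P hP i Q _
  obtain ⟨j, hj⟩ := exists_leftmostPeak_eq L P
  rcases eq_or_ne j i with rfl | hji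
  · rw [eq_or_prefers_iff_le, hj]
    exact peak_le _ _
  · refine or_iff_not_imp_left.2 fun hne => hD (hP i) _ _ hne (mem_intv_lineOf.2 (Or.inr ⟨?_, ?_⟩))
    · simpa only [Function.update_of_ne hji, ← hj] using leftmostPeak_le L (Function.update P i Q) j
    · exact leftmostPeak_le L P i

end LeftmostPeak

theorem stmt11_topsonly_singlepeaked_general (D : Set (Pref α)) (hconn : PathConnectedDom D)
    (hdiv : Diversity D) (htod : TopsOnlyDomain D) (n : ℕ) (hn : 2 ≤ n) :
    (∃ f : (Fin n → Pref α) → α, IsRule D f ∧ StrategyProof D f ∧ Anonymous D f) ↔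
    (∃ Pl ∈ D, ∃ Pu ∈ D, Reversed Pl Pu ∧
      D ⊆ {P | SinglePeaked (lineOf Pl) P} ∧ (adjGraph D).Connected) := by
  have hG : (adjGraph D).Preconnected := SimpleGraph.Connected.preconnected hconn
  constructor
  · rintro ⟨f, hrule, hsp, hanon⟩
    obtain ⟨Pl, hPl, Pu, hPu, hrev⟩ := hdiv
    have hrich : MinimallyRich D := minimallyRich_of_preconnected ⟨Pl, hPl⟩ hG
    obtain ⟨g, hg⟩ := exists_isLoneVoterRule hn hrich (htod n hn f hrule hsp) hrule hsp hanon
    have hD : IsEdgewiseSinglePeaked D := hg.isEdgewiseSinglePeaked hG htod hrich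
    exact ⟨Pl, hPl, Pu, hPu, hrev, fun P => hD.singlePeaked hG hPl hPu hrev, hconn⟩
  · rintro ⟨Pl, -, -, -, -, hD, -⟩
    have : NeZero n := ⟨by omega⟩
    exact ⟨leftmostPeak Pl, leftmostPeak_isRule Pl D, leftmostPeak_strategyProof hD,
      leftmostPeak_anonymous Pl D⟩

/-- a non-dictatorial, tops-only, unidimensional domain admits an
anonymous and strategy-proof rule iff it is a single-peaked domain on the line
`L^A` (determined by the labeling coming from diversity). -/
theorem stmt11_topsonly_singlepeaked (D : Set (Pref A)) (hD : D.Nonempty)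
    (hcard : 3 ≤ Fintype.card A) (huni : Unidimensional D)
    (hnd : ¬ DictatorialDomain D) (htod : TopsOnlyDomain D)
    (n : ℕ) (hn : 2 ≤ n) :
    (∃ f : (Fin n → Pref A) → A, IsRule D f ∧ StrategyProof D f ∧ Anonymous D f) ↔
    (∃ Pl ∈ D, ∃ Pu ∈ D, Reversed Pl Pu ∧
      D ⊆ {P | SinglePeaked (lineOf Pl) P} ∧ (adjGraph D).Connected) := by
  exact stmt11_topsonly_singlepeaked_general D huni.1 huni.2.1 htod n hn
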